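/- Let T be a tree on n vertices with diameter k − 1, where 3 ≤ k ≤ n. Then T ⪰ CP_{n,k}^{⌈k/2⌉}, and r(T) = r(CP_{n,k}^{⌈k/2⌉}) if and only if T is isomorphic to CP_{n,k}^{⌈k/2⌉}. -/

import Mathlib

/-!
Along a geodesic `P 0, …, P (k - 1)` of a connected graph, the edge `P i P (i + 1)` has at least
`i + 1` vertices closer to its left end and at least `k - 1 - i` closer to its right end. Hence for
`j ≥ 2` at least `k + 1 - 2 j` edges satisfy `μ ≥ j`, and all the edges, at least `n - 1` of them,
satisfy `μ ≥ 1`. In `CP_{n,k}^{⌈k/2⌉}` both counts are attained.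

If both counts are attained in `G`, then `G` is a tree, every edge off the geodesic has `μ = 1`, and
`μ` is exactly `min (i + 1) (k - 1 - i)` along the geodesic. The first condition makes every vertex
off the geodesic a pendent vertex attached to some `P c`. By the second, no edge of the geodesic has
such vertices on both sides, and an edge away from the middle has them all on the side of the
middle; so they are all attached to one middle vertex.
-/

namespace TreeOrder

attribute [local instance] Classical.propDecidable

variable {V : Type*} {W : Type*}

/-- `side G u v` = number of vertices strictly closer to `u` than to `v`;
for an edge `uv` of a tree this is the order of the component of `T - uv` containing `u`. -/
noncomputable def side [Fintype V] (G : SimpleGraph V) (u v : V) : ℕ :=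
  (Finset.univ.filter fun w => G.dist w u < G.dist w v).card

/-- `mu G u v = min (n_u(e), n_v(e))` for the edge `e = uv`. -/
noncomputable def mu [Fintype V] (G : SimpleGraph V) (u v : V) : ℕ :=
  min (side G u v) (side G v u)

/-- `mu` as a function on unordered pairs. -/
noncomputable def muE [Fintype V] (G : SimpleGraph V) : Sym2 V → ℕ :=
  Sym2.lift ⟨fun u v => mu G u v, fun _ _ => min_comm _ _⟩

/-- `r G i` = number of edges `e` of `G` with `μ(e) = i`. -/
noncomputable def r [Fintype V] (G : SimpleGraph V) (i : ℕ) : ℕ :=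
  (Finset.univ.filter fun e : Sym2 V => e ∈ G.edgeSet ∧ muE G e = i).card

/-- `tailSum G n k = Σ_{i=k}^{⌊n/2⌋} r_i(G)`. -/
noncomputable def tailSum [Fintype V] (G : SimpleGraph V) (n k : ℕ) : ℕ :=
  ∑ i ∈ Finset.Icc k (n / 2), r G i

/-- The order `⪯` on trees with `n` vertices, via edge division vectors. -/
def Preceq [Fintype V] [Fintype W] (n : ℕ) (G : SimpleGraph V) (H : SimpleGraph W) : Prop :=
  ∀ k, 1 ≤ k → k ≤ n / 2 → tailSum G n k ≤ tailSum H n k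

/-- The strict order `≺`. -/
def Prec [Fintype V] [Fintype W] (n : ℕ) (G : SimpleGraph V) (H : SimpleGraph W) : Prop :=
  Preceq n G H ∧ ∃ k, 1 ≤ k ∧ k ≤ n / 2 ∧ tailSum G n k < tailSum H n k

/-- Equality of edge division vectors `r(G) = r(H)`. -/
def SameEdgeDivision [Fintype V] [Fintype W] (n : ℕ) (G : SimpleGraph V)
    (H : SimpleGraph W) : Prop :=
  ∀ i, 1 ≤ i → i ≤ n / 2 → r G i = r H i

/-- `u` is a centroidal vertex: `n_u(e) ≥ n/2` for every edge `e` incident to `u`. -/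
def IsCentroidal [Fintype V] (G : SimpleGraph V) (u : V) : Prop :=
  ∀ v, G.Adj u v → Fintype.card V ≤ 2 * side G u v

/-- `u` is a proper centroidal vertex: `n_u(e) > ⌈n/2⌉` for every edge `e` incident to `u`. -/
def IsProperCentroidal [Fintype V] (G : SimpleGraph V) (u : V) : Prop :=
  ∀ v, G.Adj u v → (Fintype.card V + 1) / 2 < side G u v

/-- The edge `uv` is a center edge: `μ(uv) = ⌊n/2⌋`. -/
def IsCenterEdge [Fintype V] (G : SimpleGraph V) (u v : V) : Prop :=
  G.Adj u v ∧ mu G u v = Fintype.card V / 2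

/-- degree of a vertex -/
noncomputable def deg [Fintype V] (G : SimpleGraph V) (v : V) : ℕ :=
  (Finset.univ.filter fun w => G.Adj v w).card

/-- The path `P_n` on `n` vertices. -/
def pathG (n : ℕ) : SimpleGraph (Fin n) :=
  SimpleGraph.fromRel fun x y => (x : ℕ) + 1 = y

/-- The star `S_n` on `n` vertices. -/
def starG (n : ℕ) : SimpleGraph (Fin n) :=
  SimpleGraph.fromRel fun x _ => (x : ℕ) = 0

/-- The double star path `CP_{n;a,b}` : a path on `n - a - b` vertices (at positions
`a, …, n - b - 1`) with `a` pendent vertices attached to its first vertex and `b`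
pendent vertices attached to its last vertex. -/
def doubleStar (n a b : ℕ) : SimpleGraph (Fin n) :=
  SimpleGraph.fromRel fun x y =>
    ((x : ℕ) < a ∧ (y : ℕ) = a) ∨
    (a ≤ (x : ℕ) ∧ (x : ℕ) + 1 = y ∧ (y : ℕ) < n - b) ∨
    ((x : ℕ) = n - b - 1 ∧ n - b ≤ (y : ℕ))

/-- `CP_{n,k}^s` : a path `v_1 ⋯ v_k` (at positions `0, …, k-1`) with all
`n - k` pendent vertices attached to `v_s` (position `s - 1`). -/
def cpOne (n k s : ℕ) : SimpleGraph (Fin n) :=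
  SimpleGraph.fromRel fun x y =>
    ((x : ℕ) + 1 = y ∧ (y : ℕ) < k) ∨ ((x : ℕ) = s - 1 ∧ k ≤ (y : ℕ))

/-- The caterpillar `CP(n; n_1, …, n_k)` : a path `v_1 ⋯ v_k` (at positions `0, …, k-1`),
where pendent vertex `j` (for `k ≤ j < n`) is attached to the path vertex at
position `f j` (so `n_i = |{j : f j = i - 1}|`). -/
def caterpillar (n k : ℕ) (f : ℕ → ℕ) : SimpleGraph (Fin n) :=
  SimpleGraph.fromRel fun x y =>
    ((x : ℕ) + 1 = y ∧ (y : ℕ) < k) ∨ (k ≤ (y : ℕ) ∧ (x : ℕ) = f y)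

/-- The balanced starlike tree `SP_{n,q}` : the center is vertex `0`, and vertex
`j ≥ 1` lies on branch `(j - 1) % q` at depth `(j - 1)/q + 1`; so the `q` branches are
paths whose orders pairwise differ by at most `1`. -/
def balancedStar (n q : ℕ) : SimpleGraph (Fin n) :=
  SimpleGraph.fromRel fun x y =>
    ((x : ℕ) = 0 ∧ 1 ≤ (y : ℕ) ∧ (y : ℕ) ≤ q) ∨ (1 ≤ (x : ℕ) ∧ (x : ℕ) + q = y)

/-- The edge-moving transformation of `G` w.r.t. the edge `uv`: contract `uv` to `u`
(moving all edges at `v` to `u`) and attach `v` to `u` as a pendent vertex. -/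
def edgeMove (G : SimpleGraph V) (u v : V) : SimpleGraph V :=
  SimpleGraph.fromRel fun x y =>
    (G.Adj x y ∧ x ≠ v ∧ y ≠ v) ∨ (x = u ∧ y = v) ∨ (x = u ∧ G.Adj v y ∧ y ≠ u)

section Distance

variable {G : SimpleGraph V} {H : SimpleGraph W}

theorem edist_map_le (f : G →g H) (u v : V) : H.edist (f u) (f v) ≤ G.edist u v :=
  le_iInf fun p => (SimpleGraph.edist_le (p.map f)).trans_eq (by rw [SimpleGraph.Walk.length_map])

theorem dist_map_iso (f : G ≃g H) (u v : V) : H.dist (f u) (f v) = G.dist u v :=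
  congrArg ENat.toNat <| (edist_map_le f.toHom u v).antisymm <| by
    simpa using edist_map_le f.symm.toHom (f u) (f v)

theorem exists_adj_dist_add_one_eq {u v : V} (huv : G.Reachable u v) (hne : u ≠ v) :
    ∃ w, G.Adj u w ∧ G.dist w v + 1 = G.dist u v := by
  obtain ⟨p, hp⟩ := huv.exists_walk_length_eq_dist
  cases p with
  | nil => exact absurd rfl hne
  | cons huw q =>
    refine ⟨_, huw, ?_⟩
    rw [← SimpleGraph.length_eq_dist_of_subwalk hp (q.isSubwalk_cons huw), ← hp,
      SimpleGraph.Walk.length_cons]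

/-- `z` is a pendent vertex attached to `v`, i.e. `v` is its only neighbour. -/
def IsPendentAt (G : SimpleGraph V) (z v : V) : Prop :=
  ∀ w, G.Adj z w ↔ w = v

theorem IsPendentAt.dist_eq {z v w : V} (h : IsPendentAt G z v) (hvw : G.Reachable v w)
    (hzw : z ≠ w) : G.dist z w = G.dist v w + 1 := by
  have hzv : G.Adj z v := (h v).2 rfl
  obtain ⟨x, hzx, hx⟩ := exists_adj_dist_add_one_eq (hzv.reachable.trans hvw) hzw
  rw [← hx, (h x).1 hzx]

end Distance

section EdgeDivision

variable [Fintype V] {G : SimpleGraph V} {u v : V}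

theorem side_add_side_le (G : SimpleGraph V) (u v : V) :
    side G u v + side G v u ≤ Fintype.card V := by
  unfold side
  rw [← Finset.card_union_of_disjoint (Finset.disjoint_filter.2 fun _ _ => lt_asymm)]
  exact Finset.card_le_univ _

theorem card_le_side {S : Finset V} (hS : ∀ w ∈ S, G.dist w u < G.dist w v) :
    S.card ≤ side G u v :=
  Finset.card_le_card fun w hw => by simpa using hS w hw

theorem mem_of_side_le_card {S : Finset V} (hS : ∀ w ∈ S, G.dist w u < G.dist w v)
    (hcard : side G u v ≤ S.card) {w : V} (hw : G.dist w u < G.dist w v) : w ∈ S := by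
  rw [Finset.eq_of_subset_of_card_le (fun w hw => by simpa using hS w hw) hcard]
  simpa using hw

theorem one_le_side (huv : G.Adj u v) : 1 ≤ side G u v :=
  card_le_side (S := {u}) (by simp [SimpleGraph.dist_eq_one_iff_adj.2 huv])

/-- If the only edge of `G` leaving `S` goes from `u` to `v`, then a vertex outside `S` reaches `u`
only through `v`, so it is not closer to `u`. -/
theorem side_le_card_of_cut {S : Finset V} (huv : G.Adj u v) (hu : u ∈ S)
    (hcut : ∀ a b, G.Adj a b → a ∈ S → b ∉ S → a = u ∧ b = v) : side G u v ≤ S.card := by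
  refine Finset.card_le_card fun w hw => ?_
  simp only [Finset.mem_filter, Finset.mem_univ, true_and] at hw
  by_contra hwS
  have hwv : G.Reachable w v := SimpleGraph.Reachable.of_dist_ne_zero (by omega)
  obtain ⟨p, hp⟩ := (hwv.trans huv.symm.reachable).exists_walk_length_eq_dist
  obtain ⟨d, hd, hfst, hsnd⟩ := p.exists_boundary_dart {x | x ∉ S} hwS (by simpa using hu)
  have hdv : d.fst = v := (hcut _ _ d.adj.symm (by simpa using hsnd) hfst).2
  have hvp : v ∈ p.support := hdv ▸ p.dart_fst_mem_support_of_mem_darts hd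
  have hvw := (SimpleGraph.dist_le (p.takeUntil v hvp)).trans (p.length_takeUntil_le_length hvp)
  omega

theorem side_map_iso [Fintype W] {H : SimpleGraph W} (f : G ≃g H) (u v : V) :
    side H (f u) (f v) = side G u v :=
  (Finset.card_equiv f.toEquiv fun w => by simp [dist_map_iso]).symm

theorem muE_map_iso [Fintype W] {H : SimpleGraph W} (f : G ≃g H) (e : Sym2 V) :
    muE H (e.map f) = muE G e := by
  induction e with
  | h u v => exact congrArg₂ min (side_map_iso f u v) (side_map_iso f v u)

theorem r_eq_of_iso [Fintype W] {H : SimpleGraph W} (f : G ≃g H) (i : ℕ) : r G i = r H i := by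
  refine Finset.card_bijective (Sym2.map f)
    ⟨Sym2.map.injective f.injective, fun e => ⟨e.map f.symm, by simp [Sym2.map_map]⟩⟩ fun e => ?_
  simp only [Finset.mem_filter, Finset.mem_univ, true_and, f.map_mem_edgeSet_iff, muE_map_iso]

theorem one_le_muE {e : Sym2 V} (he : e ∈ G.edgeSet) : 1 ≤ muE G e := by
  induction e with
  | h u v => exact le_min (one_le_side he) (one_le_side (G.adj_symm he))

theorem muE_le_half (G : SimpleGraph V) (e : Sym2 V) : muE G e ≤ Fintype.card V / 2 := by
  induction e with
  | h u v =>
    have := side_add_side_le G u v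
    change min (side G u v) (side G v u) ≤ _
    omega

/-- The edges `e` with `μ(e) ≥ j`; their number is the `j`-th tail sum of the edge division
vector. -/
noncomputable def heavyEdges (G : SimpleGraph V) (j : ℕ) : Finset (Sym2 V) :=
  Finset.univ.filter fun e => e ∈ G.edgeSet ∧ j ≤ muE G e

theorem mem_heavyEdges {e : Sym2 V} {j : ℕ} :
    e ∈ heavyEdges G j ↔ e ∈ G.edgeSet ∧ j ≤ muE G e := by
  simp [heavyEdges]

theorem tailSum_eq_card_heavyEdges (G : SimpleGraph V) (j : ℕ) :
    tailSum G (Fintype.card V) j = (heavyEdges G j).card := by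
  rw [Finset.card_eq_sum_card_fiberwise (f := muE G) (t := Finset.Icc j (Fintype.card V / 2))]
  · refine Finset.sum_congr rfl fun i hi => congrArg Finset.card ?_
    ext e
    simp only [Finset.mem_filter, Finset.mem_univ, true_and, mem_heavyEdges]
    have hji := (Finset.mem_Icc.1 hi).1
    grind
  · exact fun e he => Finset.mem_Icc.2 ⟨(mem_heavyEdges.1 he).2, muE_le_half G e⟩

theorem tailSum_one_eq_card_edgeSet (G : SimpleGraph V) :
    tailSum G (Fintype.card V) 1 = Nat.card G.edgeSet := by
  rw [tailSum_eq_card_heavyEdges, Nat.card_coe_set_eq, ← Set.ncard_coe_finset]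
  congr 1
  ext e
  simpa [mem_heavyEdges] using one_le_muE

theorem card_sub_one_le_tailSum_one (hG : G.Connected) :
    Fintype.card V - 1 ≤ tailSum G (Fintype.card V) 1 := by
  have := hG.card_vert_le_card_edgeSet_add_one
  rw [Nat.card_eq_fintype_card] at this
  rw [tailSum_one_eq_card_edgeSet]
  omega

theorem isTree_of_tailSum_one_le (hG : G.Connected)
    (h : tailSum G (Fintype.card V) 1 ≤ Fintype.card V - 1) : G.IsTree := by
  have hcard := hG.card_vert_le_card_edgeSet_add_one
  have hpos : 0 < Nat.card V := have := hG.nonempty; Nat.card_pos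
  rw [tailSum_one_eq_card_edgeSet, ← Nat.card_eq_fintype_card] at h
  exact SimpleGraph.isTree_iff_connected_and_card.2 ⟨hG, by omega⟩

theorem tailSum_eq_of_sameEdgeDivision [Fintype W] {H : SimpleGraph W} {n j : ℕ}
    (h : SameEdgeDivision n G H) (hj : 1 ≤ j) : tailSum G n j = tailSum H n j :=
  Finset.sum_congr rfl fun i hi =>
    h i (hj.trans (Finset.mem_Icc.1 hi).1) (Finset.mem_Icc.1 hi).2

theorem eq_of_adj_of_side_le_one (hT : G.IsTree) (hside : side G u v ≤ 1) (huv : G.Adj u v)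
    {w : V} (huw : G.Adj u w) : w = v := by
  by_contra hwv
  have hwu : G.dist w u = 1 := SimpleGraph.dist_eq_one_iff_adj.2 huw.symm
  have hcloser : G.dist w u < G.dist w v := by
    have := hT.dist_ne_of_adj w huv
    have := hT.connected.pos_dist_of_ne hwv
    omega
  have hmem := mem_of_side_le_card (S := {u})
    (by simp [SimpleGraph.dist_eq_one_iff_adj.2 huv]) (by simpa using hside) hcloser
  exact huw.ne (Finset.mem_singleton.1 hmem).symm

/-- Follow the first edge `zy` of a shortest path from `z` to `S`: since `y` has a further
neighbour, `μ(zy) ≤ 1` forces `z` to be the pendent end. If `y` were outside `S`, it would be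
pendent for the same reason. -/
theorem exists_isPendentAt_of_mu_le_one (hT : G.IsTree) {S : Set V} (hS : S.Nonempty)
    (hSadj : ∀ s ∈ S, ∃ t ∈ S, G.Adj s t) (hmu : ∀ z ∉ S, ∀ y, G.Adj z y → mu G z y ≤ 1)
    {z : V} (hz : z ∉ S) : ∃ s ∈ S, IsPendentAt G z s := by
  obtain ⟨p, hp⟩ := hS
  have hnext (z : V) (hz : z ∉ S) :
      ∃ y, G.dist y p + 1 = G.dist z p ∧ IsPendentAt G z y := by
    obtain ⟨y, hzy, hy⟩ :=
      exists_adj_dist_add_one_eq (hT.connected z p) (ne_of_mem_of_not_mem hp hz).symm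
    have hfurther : ∃ x, G.Adj y x ∧ x ≠ z := by
      by_cases hyS : y ∈ S
      · obtain ⟨t, ht, hyt⟩ := hSadj y hyS
        exact ⟨t, hyt, ne_of_mem_of_not_mem ht hz⟩
      · obtain ⟨x, hyx, hx⟩ :=
          exists_adj_dist_add_one_eq (hT.connected y p) (ne_of_mem_of_not_mem hp hyS).symm
        exact ⟨x, hyx, by rintro rfl; omega⟩
    obtain ⟨x, hyx, hxz⟩ := hfurther
    have hyz : ¬ side G y z ≤ 1 := fun h => hxz (eq_of_adj_of_side_le_one hT h hzy.symm hyx)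
    have hside : side G z y ≤ 1 := (min_le_iff.1 (hmu z hz y hzy)).resolve_right hyz
    exact ⟨y, hy, fun w =>
      ⟨eq_of_adj_of_side_le_one hT hside hzy, fun hwy => hwy ▸ hzy⟩⟩
  obtain ⟨y, hy, hzy⟩ := hnext z hz
  refine ⟨y, ?_, hzy⟩
  by_contra hyS
  obtain ⟨x, hx, hyx⟩ := hnext y hyS
  have hzx : z = x := (hyx z).1 ((hzy y).2 rfl).symm
  subst hzx
  omega

end EdgeDivision

section Caterpillar

variable {n k s j : ℕ}

theorem cpOne_adj {x y : Fin n} :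
    (cpOne n k s).Adj x y ↔ x ≠ y ∧
      ((((x : ℕ) + 1 = y ∧ (y : ℕ) < k) ∨ ((x : ℕ) = s - 1 ∧ k ≤ (y : ℕ))) ∨
      (((y : ℕ) + 1 = x ∧ (x : ℕ) < k) ∨ ((y : ℕ) = s - 1 ∧ k ≤ (x : ℕ)))) :=
  SimpleGraph.fromRel_adj _ _ _

theorem exists_of_mem_edgeSet_cpOne (hs : s - 1 < k) {e : Sym2 (Fin n)}
    (he : e ∈ (cpOne n k s).edgeSet) :
    ∃ x y : Fin n, e = s(x, y) ∧ x < y ∧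
      (((x : ℕ) + 1 = y ∧ (y : ℕ) < k) ∨ ((x : ℕ) = s - 1 ∧ k ≤ (y : ℕ))) := by
  induction e with
  | h x y =>
    rw [SimpleGraph.mem_edgeSet, cpOne_adj] at he
    obtain ⟨-, h | h⟩ := he
    · exact ⟨x, y, rfl, by omega, h⟩
    · exact ⟨y, x, Sym2.eq_swap, by omega, h⟩

theorem sup_injOn_edgeSet_cpOne (hs : s - 1 < k) :
    Set.InjOn (fun e : Sym2 (Fin n) => (e.sup : ℕ)) (cpOne n k s).edgeSet := by
  intro e he e' he' hsup
  obtain ⟨x, y, rfl, hxy, h⟩ := exists_of_mem_edgeSet_cpOne hs he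
  obtain ⟨x', y', rfl, hxy', h'⟩ := exists_of_mem_edgeSet_cpOne hs he'
  simp only [Sym2.sup_mk, sup_of_le_right hxy.le, sup_of_le_right hxy'.le] at hsup
  rw [show x = x' by omega, show y = y' by omega]

theorem mu_cpOne_path_le_left {x y : Fin n} (hxy : (x : ℕ) + 1 = y) (hyk : (y : ℕ) < k)
    (hys : (y : ℕ) ≤ s - 1) : mu (cpOne n k s) x y ≤ y := by
  have hadj : (cpOne n k s).Adj x y := by rw [cpOne_adj]; omega
  have hside := side_le_card_of_cut (S := Finset.Iic x) hadj (by simp) fun a b hab ha hb => by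
    rw [Finset.mem_Iic] at ha hb
    rw [cpOne_adj] at hab
    omega
  rw [Fin.card_Iic, hxy] at hside
  exact min_le_of_left_le hside

theorem mu_cpOne_path_le_right (hkn : k ≤ n) {x y : Fin n} (hxy : (x : ℕ) + 1 = y)
    (hyk : (y : ℕ) < k) (hsy : s - 1 < y) : mu (cpOne n k s) x y ≤ k - y := by
  have hadj : (cpOne n k s).Adj x y := by rw [cpOne_adj]; omega
  have hside := side_le_card_of_cut (S := Finset.Icc y ⟨k - 1, by omega⟩) hadj.symm
    (by rw [Finset.mem_Icc, Fin.le_def, Fin.le_def]; simp only; omega) fun a b hab ha hb => by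
      simp only [Finset.mem_Icc, Fin.le_def] at ha hb
      rw [cpOne_adj] at hab
      omega
  rw [Fin.card_Icc] at hside
  exact min_le_of_right_le (hside.trans (by simp only; omega))

theorem mu_cpOne_pendent_le {x y : Fin n} (hx : (x : ℕ) = s - 1) (hs : s - 1 < k)
    (hy : k ≤ (y : ℕ)) : mu (cpOne n k s) x y ≤ 1 := by
  have hadj : (cpOne n k s).Adj x y := by rw [cpOne_adj]; omega
  have hside := side_le_card_of_cut (S := {y}) hadj.symm (by simp) fun a b hab ha hb => by
    rw [Finset.mem_singleton] at ha hb
    rw [cpOne_adj] at hab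
    omega
  exact min_le_of_right_le (by simpa using hside)

theorem tailSum_cpOne_one_le (hs : s - 1 < k) : tailSum (cpOne n k s) n 1 ≤ n - 1 := by
  have htail := tailSum_eq_card_heavyEdges (cpOne n k s) 1
  rw [Fintype.card_fin] at htail
  rw [htail, ← Nat.card_Ico]
  refine Finset.card_le_card_of_injOn (fun e => (e.sup : ℕ)) (fun e he => ?_)
    ((sup_injOn_edgeSet_cpOne hs).mono fun e he => (mem_heavyEdges.1 he).1)
  obtain ⟨x, y, rfl, hxy, -⟩ := exists_of_mem_edgeSet_cpOne hs (mem_heavyEdges.1 he).1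
  simp only [Sym2.sup_mk, sup_of_le_right hxy.le, Finset.coe_Ico, Set.mem_Ico]
  omega

theorem tailSum_cpOne_middle_le (hk : 1 ≤ k) (hkn : k ≤ n) (hj : 2 ≤ j) :
    tailSum (cpOne n k ((k + 1) / 2)) n j ≤ k + 1 - 2 * j := by
  have hs : (k + 1) / 2 - 1 < k := by omega
  have htail := tailSum_eq_card_heavyEdges (cpOne n k ((k + 1) / 2)) j
  rw [Fintype.card_fin] at htail
  have hcard : (Finset.Icc j (k - j)).card ≤ k + 1 - 2 * j := by rw [Nat.card_Icc]; omega
  rw [htail]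
  refine (Finset.card_le_card_of_injOn (fun e => (e.sup : ℕ)) (fun e he => ?_)
    ((sup_injOn_edgeSet_cpOne hs).mono fun e he => (mem_heavyEdges.1 he).1)).trans hcard
  obtain ⟨he, hmu⟩ := mem_heavyEdges.1 he
  obtain ⟨x, y, rfl, hlt, ⟨hxy, hyk⟩ | ⟨hx, hy⟩⟩ := exists_of_mem_edgeSet_cpOne hs he
  · simp only [Sym2.sup_mk, sup_of_le_right hlt.le, Finset.coe_Icc, Set.mem_Icc]
    change j ≤ mu _ x y at hmu
    rcases le_or_gt (y : ℕ) ((k + 1) / 2 - 1) with hy | hy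
    · have := mu_cpOne_path_le_left hxy hyk hy
      omega
    · have := mu_cpOne_path_le_right hkn hxy hyk hy
      omega
  · exact absurd (hj.trans (hmu.trans (mu_cpOne_pendent_le hx hs hy))) (by omega)

end Caterpillar

/-- `P 0, …, P (k - 1)` are the consecutive vertices of a geodesic of `G`. The values of `P` from
`k` on are irrelevant. -/
def IsGeodesic (G : SimpleGraph V) (k : ℕ) (P : ℕ → V) : Prop :=
  ∀ i j, i ≤ j → j < k → G.dist (P i) (P j) = j - i

theorem exists_isGeodesic [Finite V] {G : SimpleGraph V} (hG : G.Connected) {k : ℕ}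
    (hk : k ≤ G.diam + 1) : ∃ P, IsGeodesic G k P := by
  have := hG.nonempty
  obtain ⟨u, v, huv⟩ := G.exists_dist_eq_diam
  obtain ⟨p, hp⟩ := hG.exists_walk_length_eq_dist u v
  refine ⟨p.getVert, fun i j hij hj => ?_⟩
  have hsub := ((p.drop i).isSubwalk_take (j - i)).trans (p.isSubwalk_drop i)
  have hdist := SimpleGraph.length_eq_dist_of_subwalk hp hsub
  rw [SimpleGraph.Walk.take_length, SimpleGraph.Walk.drop_length,
    SimpleGraph.Walk.drop_getVert, Nat.add_sub_cancel' hij] at hdist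
  omega

namespace IsGeodesic

variable {G : SimpleGraph V} {k i j : ℕ} {P : ℕ → V}

theorem dist_eq (hP : IsGeodesic G k P) (hi : i < k) (hj : j < k) :
    G.dist (P i) (P j) = Nat.dist i j := by
  rcases le_total i j with hij | hji
  · rw [hP i j hij hj, Nat.dist_eq_sub_of_le hij]
  · rw [SimpleGraph.dist_comm, hP j i hji hi, Nat.dist_eq_sub_of_le_right hji]

theorem reachable (hP : IsGeodesic G k P) (hi : i < k) (hj : j < k) :
    G.Reachable (P i) (P j) := by
  rcases eq_or_ne i j with rfl | hij
  · rfl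
  · refine SimpleGraph.Reachable.of_dist_ne_zero ?_
    rw [hP.dist_eq hi hj]
    exact mt Nat.eq_of_dist_eq_zero hij

theorem reverse (hP : IsGeodesic G k P) : IsGeodesic G k fun i => P (k - 1 - i) := by
  intro i j hij hj
  rw [SimpleGraph.dist_comm, hP _ _ (by omega) (by omega)]
  omega

theorem image_reverse (P : ℕ → V) (k : ℕ) :
    (fun i => P (k - 1 - i)) '' Set.Iio k = P '' Set.Iio k := by
  rw [← Set.image_image P]
  congr 1
  ext i
  simp only [Set.mem_image, Set.mem_Iio]
  exact ⟨by omega, fun hi => ⟨k - 1 - i, by omega, by omega⟩⟩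

theorem injOn (hP : IsGeodesic G k P) : Set.InjOn P (Set.Iio k) := by
  intro i hi j hj hij
  have hdist := hP.dist_eq hi hj
  rw [hij, SimpleGraph.dist_self] at hdist
  exact Nat.eq_of_dist_eq_zero hdist.symm

theorem adj_iff (hP : IsGeodesic G k P) (hi : i < k) (hj : j < k) :
    G.Adj (P i) (P j) ↔ i + 1 = j ∨ j + 1 = i := by
  rw [← SimpleGraph.dist_eq_one_iff_adj, hP.dist_eq hi hj, Nat.dist]
  omega

theorem card_image (hP : IsGeodesic G k P) {S : Finset ℕ} (hS : ∀ i ∈ S, i < k) :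
    (S.image P).card = S.card :=
  Finset.card_image_of_injOn (hP.injOn.mono hS)

theorem le_card [Fintype V] (hP : IsGeodesic G k P) : k ≤ Fintype.card V := by
  simpa [hP.card_image (S := Finset.range k) (by simp)] using
    Finset.card_le_univ ((Finset.range k).image P)

theorem exists_adj (hP : IsGeodesic G k P) (hk : 2 ≤ k) {v : V} (hv : v ∈ P '' Set.Iio k) :
    ∃ w ∈ P '' Set.Iio k, G.Adj v w := by
  obtain ⟨i, hi, rfl⟩ := hv
  rw [Set.mem_Iio] at hi
  by_cases hik : i + 1 < k
  · exact ⟨_, Set.mem_image_of_mem P hik, (hP.adj_iff hi hik).2 (Or.inl rfl)⟩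
  · have hi' : i - 1 < k := by omega
    exact ⟨_, Set.mem_image_of_mem P hi', (hP.adj_iff hi hi').2 (by omega)⟩

theorem initial_closer (hP : IsGeodesic G k P) (hi : i + 1 < k) :
    ∀ w ∈ (Finset.range (i + 1)).image P, G.dist w (P i) < G.dist w (P (i + 1)) := by
  simp only [Finset.forall_mem_image, Finset.mem_range]
  intro a ha
  rw [hP.dist_eq (by omega) (by omega), hP.dist_eq (by omega) hi, Nat.dist, Nat.dist]
  omega

theorem final_closer (hP : IsGeodesic G k P) (hi : i + 1 < k) :
    ∀ w ∈ (Finset.Ico (i + 1) k).image P, G.dist w (P (i + 1)) < G.dist w (P i) := by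
  simp only [Finset.forall_mem_image, Finset.mem_Ico]
  intro a ha
  rw [hP.dist_eq (by omega) (by omega), hP.dist_eq (by omega) (by omega), Nat.dist, Nat.dist]
  omega

theorem card_image_initial (hP : IsGeodesic G k P) (hi : i + 1 < k) :
    ((Finset.range (i + 1)).image P).card = i + 1 := by
  rw [hP.card_image fun a ha => by rw [Finset.mem_range] at ha; omega, Finset.card_range]

theorem card_image_final (hP : IsGeodesic G k P) (i : ℕ) :
    ((Finset.Ico (i + 1) k).image P).card = k - (i + 1) := by
  rw [hP.card_image fun a ha => (Finset.mem_Ico.1 ha).2, Nat.card_Ico]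

theorem succ_le_side [Fintype V] (hP : IsGeodesic G k P) (hi : i + 1 < k) :
    i + 1 ≤ side G (P i) (P (i + 1)) :=
  (hP.card_image_initial hi).ge.trans (card_le_side (hP.initial_closer hi))

theorem sub_succ_le_side [Fintype V] (hP : IsGeodesic G k P) (hi : i + 1 < k) :
    k - (i + 1) ≤ side G (P (i + 1)) (P i) :=
  (hP.card_image_final i).ge.trans (card_le_side (hP.final_closer hi))

/-- The `i`-th edge of the path `P 0, P 1, …`. -/
def pathEdge (P : ℕ → V) (i : ℕ) : Sym2 V := s(P i, P (i + 1))

theorem pathEdge_injOn (hP : IsGeodesic G k P) : Set.InjOn (pathEdge P) {i | i + 1 < k} := by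
  intro i hi j hj hij
  rw [Set.mem_ofPred_eq] at hi hj
  rcases Sym2.eq_iff.1 hij with ⟨h, -⟩ | ⟨h, h'⟩
  · exact hP.injOn (Set.mem_Iio.2 (by omega)) (Set.mem_Iio.2 (by omega)) h
  · have := hP.injOn (Set.mem_Iio.2 (by omega)) (Set.mem_Iio.2 (by omega)) h
    have := hP.injOn (Set.mem_Iio.2 (by omega)) (Set.mem_Iio.2 (by omega)) h'
    omega

theorem image_pathEdge_subset_heavyEdges [Fintype V] (hP : IsGeodesic G k P) (hj : 1 ≤ j) :
    (Finset.Ico (j - 1) (k - j)).image (pathEdge P) ⊆ heavyEdges G j := by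
  simp only [Finset.image_subset_iff, Finset.mem_Ico, mem_heavyEdges]
  rintro i ⟨hji, hik⟩
  have hi : i + 1 < k := by omega
  have hleft : j ≤ side G (P i) (P (i + 1)) := (by omega : j ≤ i + 1).trans (hP.succ_le_side hi)
  have hright : j ≤ side G (P (i + 1)) (P i) :=
    (by omega : j ≤ k - (i + 1)).trans (hP.sub_succ_le_side hi)
  exact ⟨(hP.adj_iff (by omega) hi).2 (Or.inl rfl), le_min hleft hright⟩

theorem card_image_pathEdge (hP : IsGeodesic G k P) (hj : 1 ≤ j) :
    ((Finset.Ico (j - 1) (k - j)).image (pathEdge P)).card = k + 1 - 2 * j := by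
  rw [Finset.card_image_of_injOn, Nat.card_Ico]
  · omega
  · refine hP.pathEdge_injOn.mono fun i hi => ?_
    rw [Finset.coe_Ico, Set.mem_Ico] at hi
    rw [Set.mem_ofPred_eq]
    omega

theorem le_tailSum [Fintype V] (hP : IsGeodesic G k P) (hj : 1 ≤ j) :
    k + 1 - 2 * j ≤ tailSum G (Fintype.card V) j := by
  rw [tailSum_eq_card_heavyEdges, ← hP.card_image_pathEdge hj]
  exact Finset.card_le_card (hP.image_pathEdge_subset_heavyEdges hj)

theorem exists_pathEdge_of_tailSum_le [Fintype V] (hP : IsGeodesic G k P) (hj : 1 ≤ j)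
    (htail : tailSum G (Fintype.card V) j ≤ k + 1 - 2 * j) {e : Sym2 V}
    (he : e ∈ heavyEdges G j) : ∃ i ∈ Finset.Ico (j - 1) (k - j), pathEdge P i = e := by
  rw [tailSum_eq_card_heavyEdges, ← hP.card_image_pathEdge hj] at htail
  rw [← Finset.eq_of_subset_of_card_le (hP.image_pathEdge_subset_heavyEdges hj) htail] at he
  exact Finset.mem_image.1 he

theorem mu_pathEdge_le [Fintype V] (hP : IsGeodesic G k P)
    (htail : ∀ j, 2 ≤ j → tailSum G (Fintype.card V) j ≤ k + 1 - 2 * j) (hi : i + 1 < k) :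
    mu G (P i) (P (i + 1)) ≤ min (i + 1) (k - (i + 1)) := by
  rcases le_or_gt (mu G (P i) (P (i + 1))) 1 with hmu | hmu
  · omega
  · have hadj : G.Adj (P i) (P (i + 1)) := (hP.adj_iff (by omega) hi).2 (Or.inl rfl)
    obtain ⟨i', hi', hii'⟩ := hP.exists_pathEdge_of_tailSum_le (by omega) (htail _ hmu)
      (e := pathEdge P i) (mem_heavyEdges.2 ⟨hadj, le_rfl⟩)
    rw [Finset.mem_Ico] at hi'
    have := hP.pathEdge_injOn (by rw [Set.mem_ofPred_eq]; omega) hi hii'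
    omega

theorem mu_le_one_of_notMem [Fintype V] (hP : IsGeodesic G k P)
    (htail : tailSum G (Fintype.card V) 2 ≤ k + 1 - 2 * 2) {z y : V}
    (hz : z ∉ P '' Set.Iio k) (hzy : G.Adj z y) : mu G z y ≤ 1 := by
  by_contra! hmu
  obtain ⟨i, hi, hiz⟩ := hP.exists_pathEdge_of_tailSum_le one_le_two htail
    (e := s(z, y)) (mem_heavyEdges.2 ⟨hzy, hmu⟩)
  rw [Finset.mem_Ico] at hi
  rcases Sym2.eq_iff.1 hiz with ⟨rfl, -⟩ | ⟨-, rfl⟩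
  · exact hz ⟨i, Set.mem_Iio.2 (by omega), rfl⟩
  · exact hz ⟨i + 1, Set.mem_Iio.2 (by omega), rfl⟩

theorem dist_eq_of_isPendentAt (hP : IsGeodesic G k P) {z : V} {c : ℕ}
    (hz : z ∉ P '' Set.Iio k) (hc : c < k) (hzc : IsPendentAt G z (P c)) (hi : i < k) :
    G.dist z (P i) = Nat.dist c i + 1 := by
  rw [hzc.dist_eq (hP.reachable hc hi) (by rintro rfl; exact hz ⟨i, hi, rfl⟩), hP.dist_eq hc hi]

theorem attachment_cases [Fintype V] (hP : IsGeodesic G k P) (hi : i + 1 < k)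
    (hmu : mu G (P i) (P (i + 1)) ≤ min (i + 1) (k - (i + 1))) :
    (2 * i + 2 ≤ k ∧ ∀ z ∉ P '' Set.Iio k, ∀ c < k, IsPendentAt G z (P c) → i < c) ∨
      (k ≤ 2 * i + 2 ∧ ∀ z ∉ P '' Set.Iio k, ∀ c < k, IsPendentAt G z (P c) → c ≤ i) := by
  have hleft := hP.succ_le_side hi
  have hright := hP.sub_succ_le_side hi
  rw [mu] at hmu
  have hcases : (2 * i + 2 ≤ k ∧ side G (P i) (P (i + 1)) ≤ i + 1) ∨
      (k ≤ 2 * i + 2 ∧ side G (P (i + 1)) (P i) ≤ k - (i + 1)) := by omega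
  refine hcases.imp (fun ⟨hik, hside⟩ => ⟨hik, fun z hz c hc hzc => ?_⟩)
    fun ⟨hik, hside⟩ => ⟨hik, fun z hz c hc hzc => ?_⟩
  · by_contra! hci
    have hcloser : G.dist z (P i) < G.dist z (P (i + 1)) := by
      rw [hP.dist_eq_of_isPendentAt hz hc hzc (by omega),
        hP.dist_eq_of_isPendentAt hz hc hzc hi, Nat.dist, Nat.dist]
      omega
    have hmem := mem_of_side_le_card (hP.initial_closer hi)
      (hside.trans (hP.card_image_initial hi).ge) hcloser
    obtain ⟨a, ha, rfl⟩ := Finset.mem_image.1 hmem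
    exact hz ⟨a, (Finset.mem_range.1 ha).trans hi, rfl⟩
  · by_contra! hci
    have hcloser : G.dist z (P (i + 1)) < G.dist z (P i) := by
      rw [hP.dist_eq_of_isPendentAt hz hc hzc (by omega),
        hP.dist_eq_of_isPendentAt hz hc hzc (by omega), Nat.dist, Nat.dist]
      omega
    have hmem := mem_of_side_le_card (hP.final_closer hi)
      (hside.trans (hP.card_image_final i).ge) hcloser
    obtain ⟨a, ha, rfl⟩ := Finset.mem_image.1 hmem
    exact hz ⟨a, (Finset.mem_Ico.1 ha).2, rfl⟩

theorem exists_common_attachment [Fintype V] (hP : IsGeodesic G k P) (hk : 2 ≤ k)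
    (hmu : ∀ i, i + 1 < k → mu G (P i) (P (i + 1)) ≤ min (i + 1) (k - (i + 1)))
    (hpendent : ∀ z ∉ P '' Set.Iio k, ∃ v ∈ P '' Set.Iio k, IsPendentAt G z v) :
    ∃ c, (c = (k + 1) / 2 - 1 ∨ c = k / 2) ∧
      ∀ z ∉ P '' Set.Iio k, IsPendentAt G z (P c) := by
  have hcases (i : ℕ) (hi : i + 1 < k) := hP.attachment_cases hi (hmu i hi)
  have hconst (c : ℕ)
      (hc : ∀ z ∉ P '' Set.Iio k, ∀ a < k, IsPendentAt G z (P a) → a = c) :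
      ∀ z ∉ P '' Set.Iio k, IsPendentAt G z (P c) := by
    intro z hz
    obtain ⟨_, ⟨a, ha, rfl⟩, hza⟩ := hpendent z hz
    exact hc z hz a ha hza ▸ hza
  rcases hcases (k / 2 - 1) (by omega) with ⟨-, hgt⟩ | ⟨heven, hle⟩
  · refine ⟨k / 2, Or.inr rfl, hconst _ fun z hz a ha hza => ?_⟩
    have := hgt z hz a ha hza
    by_contra hne
    rcases hcases (k / 2) (by omega) with ⟨hlt, -⟩ | ⟨-, hle⟩
    · omega
    · have := hle z hz a ha hza
      omega
  · refine ⟨(k + 1) / 2 - 1, Or.inl rfl, hconst _ fun z hz a ha hza => ?_⟩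
    have := hle z hz a ha hza
    by_contra hne
    rcases hcases (k / 2 - 2) (by omega) with ⟨-, hgt⟩ | ⟨hlt, -⟩
    · have := hgt z hz a ha hza
      omega
    · omega

theorem nonempty_iso_cpOne [Fintype V] (hP : IsGeodesic G k P) {s : ℕ} (hs : s - 1 < k)
    (hz : ∀ z ∉ P '' Set.Iio k, IsPendentAt G z (P (s - 1))) :
    Nonempty (G ≃g cpOne (Fintype.card V) k s) := by
  have hkn := hP.le_card
  obtain ⟨f, hf⟩ : ∃ f : Fin (Fintype.card V) ≃ V,
      ∀ i : Fin (Fintype.card V), (i : ℕ) < k → f i = P i := by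
    obtain ⟨g, hg⟩ := Set.MapsTo.exists_equiv_extend_of_card_eq (α := Fin (Fintype.card V))
      (t := Finset.univ) (s := {i | (i : ℕ) < k}) (f := fun i => P i) (by simp)
      (fun _ _ => Finset.mem_coe.2 (Finset.mem_univ _))
      fun a ha b hb hab => Fin.ext (hP.injOn ha hb hab)
    exact ⟨g.trans (Equiv.subtypeUnivEquiv Finset.mem_univ), hg⟩
  have hoff (i : Fin (Fintype.card V)) (hi : ¬ (i : ℕ) < k) : f i ∉ P '' Set.Iio k := by
    rintro ⟨a, ha, hai⟩
    rw [Set.mem_Iio] at ha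
    rw [← hf ⟨a, by omega⟩ ha, f.apply_eq_iff_eq] at hai
    exact hi (hai ▸ ha)
  have hcenter (i : Fin (Fintype.card V)) : f i = P (s - 1) ↔ (i : ℕ) = s - 1 := by
    rw [← hf ⟨s - 1, by omega⟩ hs, f.apply_eq_iff_eq, Fin.ext_iff]
  refine ⟨SimpleGraph.Iso.symm ⟨f, fun {x y} => ?_⟩⟩
  rw [cpOne_adj, Ne, Fin.ext_iff]
  by_cases hx : (x : ℕ) < k
  · by_cases hy : (y : ℕ) < k
    · rw [hf x hx, hf y hy, hP.adj_iff hx hy]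
      omega
    · rw [G.adj_comm, hz _ (hoff y hy), hcenter]
      omega
  · rw [hz _ (hoff x hx), hcenter]
    omega

theorem nonempty_iso_cpOne_of_tailSum_le [Fintype V] (hP : IsGeodesic G k P) (hT : G.IsTree)
    (hk : 2 ≤ k) (htail : ∀ j, 2 ≤ j → tailSum G (Fintype.card V) j ≤ k + 1 - 2 * j) :
    Nonempty (G ≃g cpOne (Fintype.card V) k ((k + 1) / 2)) := by
  have hpendent (z : V) (hz : z ∉ P '' Set.Iio k) : ∃ v ∈ P '' Set.Iio k, IsPendentAt G z v :=
    exists_isPendentAt_of_mu_le_one hT ⟨P 0, Set.mem_image_of_mem P (Set.mem_Iio.2 (by omega))⟩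
      (fun _ => hP.exists_adj hk) (fun _ hz _ => hP.mu_le_one_of_notMem (htail 2 le_rfl) hz) hz
  obtain ⟨c, rfl | rfl, hattach⟩ := hP.exists_common_attachment hk
    (fun _ => hP.mu_pathEdge_le htail) hpendent
  · exact hP.nonempty_iso_cpOne (by omega) hattach
  · refine hP.reverse.nonempty_iso_cpOne (by omega) fun z hz => ?_
    rw [show k - 1 - ((k + 1) / 2 - 1) = k / 2 by omega]
    exact hattach z (by rwa [image_reverse] at hz)

end IsGeodesic

theorem stmt13_general {V : Type*} [Fintype V] (G : SimpleGraph V) (hG : G.Connected) (k : ℕ)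
    (hk : 2 ≤ k) (hd : k ≤ G.diam + 1) :
    Preceq (Fintype.card V) (cpOne (Fintype.card V) k ((k + 1) / 2)) G ∧
    (SameEdgeDivision (Fintype.card V) G (cpOne (Fintype.card V) k ((k + 1) / 2)) ↔
      Nonempty (G ≃g cpOne (Fintype.card V) k ((k + 1) / 2))) := by
  obtain ⟨P, hP⟩ := exists_isGeodesic hG hd
  have hcp_one := tailSum_cpOne_one_le (n := Fintype.card V) (k := k) (s := (k + 1) / 2) (by omega)
  have hcp {j : ℕ} := tailSum_cpOne_middle_le (j := j) (by omega : 1 ≤ k) hP.le_card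
  refine ⟨fun j hj _ => ?_, fun hsame => ?_, fun ⟨f⟩ i _ _ => r_eq_of_iso f i⟩
  · rcases hj.eq_or_lt with rfl | hj
    · exact hcp_one.trans (card_sub_one_le_tailSum_one hG)
    · exact (hcp hj).trans (hP.le_tailSum hj.le)
  · have hT : G.IsTree := isTree_of_tailSum_one_le hG <|
      (tailSum_eq_of_sameEdgeDivision hsame le_rfl).trans_le hcp_one
    exact hP.nonempty_iso_cpOne_of_tailSum_le hT hk fun j hj =>
      (tailSum_eq_of_sameEdgeDivision hsame (by omega)).trans_le (hcp hj)

/-- Let `T` be a tree on `n` vertices with diameter `k − 1`, where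
`3 ≤ k ≤ n`. Then `T ⪰ CP_{n,k}^{⌈k/2⌉}`, and `r(T) = r(CP_{n,k}^{⌈k/2⌉})` iff `T` is
isomorphic to `CP_{n,k}^{⌈k/2⌉}`. -/
theorem stmt13 {V : Type*} [Fintype V] (G : SimpleGraph V) (hT : G.IsTree) (k : ℕ)
    (hk3 : 3 ≤ k) (hkn : k ≤ Fintype.card V) (hd : G.diam = k - 1) :
    Preceq (Fintype.card V) (cpOne (Fintype.card V) k ((k + 1) / 2)) G ∧
    (SameEdgeDivision (Fintype.card V) G (cpOne (Fintype.card V) k ((k + 1) / 2)) ↔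
      Nonempty (G ≃g cpOne (Fintype.card V) k ((k + 1) / 2))) := by
  exact stmt13_general G hT.connected k (by omega) (by omega)

end TreeOrder
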